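/- Let n ≥ 2, let Ω, Ω̃ ⊆ ℝⁿ be bounded, uniformly convex open domains with smooth boundary with defining functions h̃ and h respectively, and suppose the closure of Ω̃ is contained in the open unit ball B₁(0). Then there exists a constant C₂₈ > 0, depending only on Ω and Ω̃, such that for every strictly convex solution (u, c) of the second boundary value problem for the Lorentz mean curvature operator on (Ω, Ω̃), with Legendre transform ũ, one has for every y ∈ ∂Ω̃: ⟨β̃(y), D²ũ(y) β̃(y)⟩ ≤ C₂₈, where β̃(y) = ∇h̃(∇ũ(y)). -/

import Mathlib

noncomputable section
open MeasureTheory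
open scoped RealInnerProductSpace

/-- The `i`-th standard basis vector of `ℝⁿ`. -/
def ev (n : ℕ) (i : Fin n) : EuclideanSpace ℝ (Fin n) := EuclideanSpace.single i 1

/-- Lorentz mean curvature operator `M[u] x = ∑ i, ∂ᵢ (∂ᵢ u / √(1 - |∇u|²)) x`. -/
def MOp (n : ℕ) (u : EuclideanSpace ℝ (Fin n) → ℝ) (x : EuclideanSpace ℝ (Fin n)) : ℝ :=
  ∑ i : Fin n,
    fderiv ℝ (fun y => fderiv ℝ u y (ev n i) / Real.sqrt (1 - ‖gradient u y‖ ^ 2)) x (ev n i)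

/-- Euclidean mean curvature operator `E[u] x = ∑ i, ∂ᵢ (∂ᵢ u / √(1 + |∇u|²)) x`. -/
def EOp (n : ℕ) (u : EuclideanSpace ℝ (Fin n) → ℝ) (x : EuclideanSpace ℝ (Fin n)) : ℝ :=
  ∑ i : Fin n,
    fderiv ℝ (fun y => fderiv ℝ u y (ev n i) / Real.sqrt (1 + ‖gradient u y‖ ^ 2)) x (ev n i)

/-- `Ω` is a uniformly convex domain with smooth boundary, exhibited by the defining
function `h` with uniform concavity constant `θ`:  `h` is smooth, `Ω = {h > 0}`,
`|∇h| = 1` on `∂Ω`, and `⟨ξ, D²h(p) ξ⟩ ≤ -θ |ξ|²` for all `p, ξ`. -/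
def IsUnifConvexDefFn (n : ℕ) (Ω : Set (EuclideanSpace ℝ (Fin n)))
    (h : EuclideanSpace ℝ (Fin n) → ℝ) (θ : ℝ) : Prop :=
  ContDiff ℝ (⊤ : ℕ∞) h ∧ Ω = {p | 0 < h p} ∧
  (∀ p ∈ frontier Ω, ‖gradient h p‖ = 1) ∧ 0 < θ ∧
  ∀ p ξ : EuclideanSpace ℝ (Fin n), ⟪ξ, fderiv ℝ (gradient h) p ξ⟫ ≤ -θ * ‖ξ‖ ^ 2

/-- `u` is smooth on the closure of `Ω` (i.e. on an open neighbourhood of it). -/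
def SmoothOnClosure (n : ℕ) (Ω : Set (EuclideanSpace ℝ (Fin n)))
    (u : EuclideanSpace ℝ (Fin n) → ℝ) : Prop :=
  ∃ U : Set (EuclideanSpace ℝ (Fin n)), IsOpen U ∧ closure Ω ⊆ U ∧ ContDiffOn ℝ (⊤ : ℕ∞) u U

/-- `(u, c)` is a strictly convex solution of the second boundary value problem for the
Lorentz mean curvature operator on `(Ω, Ω')`: `u` is smooth up to the boundary, spacelike
(`|∇u| < 1`), has positive definite Hessian `D²u` on the closure of `Ω`, its gradient map
is a bijection from `Ω` onto `Ω'`, and `M[u] = c` on `Ω`. -/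
def IsSol (n : ℕ) (Ω Ω' : Set (EuclideanSpace ℝ (Fin n)))
    (u : EuclideanSpace ℝ (Fin n) → ℝ) (c : ℝ) : Prop :=
  SmoothOnClosure n Ω u ∧
  (∀ x ∈ closure Ω, ‖gradient u x‖ < 1) ∧
  (∀ x ∈ closure Ω, ∀ ξ : EuclideanSpace ℝ (Fin n), ξ ≠ 0 →
      0 < ⟪ξ, fderiv ℝ (gradient u) x ξ⟫) ∧
  Set.BijOn (gradient u) Ω Ω' ∧
  (∀ x ∈ Ω, MOp n u x = c)

/-- `(u, c)` is a strictly convex solution of the second boundary value problem for the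
Euclidean mean curvature operator on `(Ω, Ω')`. -/
def IsSolE (n : ℕ) (Ω Ω' : Set (EuclideanSpace ℝ (Fin n)))
    (u : EuclideanSpace ℝ (Fin n) → ℝ) (c : ℝ) : Prop :=
  SmoothOnClosure n Ω u ∧
  (∀ x ∈ closure Ω, ∀ ξ : EuclideanSpace ℝ (Fin n), ξ ≠ 0 →
      0 < ⟪ξ, fderiv ℝ (gradient u) x ξ⟫) ∧
  Set.BijOn (gradient u) Ω Ω' ∧
  (∀ x ∈ Ω, EOp n u x = c)

/-- `ut` is the Legendre transform of `u`: it is smooth up to the boundary of `Ω'`,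
satisfies `ut (∇u x) = ⟨x, ∇u x⟩ - u x` and `∇ut (∇u x) = x` for `x ∈ Ω`. -/
def IsLegendre (n : ℕ) (Ω Ω' : Set (EuclideanSpace ℝ (Fin n)))
    (u ut : EuclideanSpace ℝ (Fin n) → ℝ) : Prop :=
  SmoothOnClosure n Ω' ut ∧
  (∀ x ∈ Ω, ut (gradient u x) = ⟪x, gradient u x⟫ - u x) ∧
  (∀ x ∈ Ω, gradient ut (gradient u x) = x)

/-- The coefficient matrix `s_ij(p) = (δ_ij + pᵢpⱼ/(1 - |p|²)) / √(1 - |p|²)` of the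
Lorentz mean curvature operator written in nondivergence form. -/
def sMat (n : ℕ) (p : EuclideanSpace ℝ (Fin n)) (i j : Fin n) : ℝ :=
  ((if i = j then (1 : ℝ) else 0) + p i * p j / (1 - ‖p‖ ^ 2)) / Real.sqrt (1 - ‖p‖ ^ 2)

/-- `Ω` has smooth boundary: it is the superlevel set of a smooth function whose
gradient does not vanish on the boundary. -/
def HasSmoothBoundary (n : ℕ) (Ω : Set (EuclideanSpace ℝ (Fin n))) : Prop :=
  ∃ g : EuclideanSpace ℝ (Fin n) → ℝ, ContDiff ℝ (⊤ : ℕ∞) g ∧ Ω = {p | 0 < g p} ∧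
    ∀ p ∈ frontier Ω, gradient g p ≠ 0

/-- `B(p) = Iₙ + p pᵀ / (v (1 + v))`, `v = √(1 - |p|²)`: the positive square root of the
inverse induced metric of a spacelike graph with gradient `p`. -/
def sqB (n : ℕ) (p : EuclideanSpace ℝ (Fin n)) : Matrix (Fin n) (Fin n) ℝ :=
  1 + (Real.sqrt (1 - ‖p‖ ^ 2) * (1 + Real.sqrt (1 - ‖p‖ ^ 2)))⁻¹ •
      Matrix.of fun i j => p i * p j

/-- `B'(p) = Iₙ - p pᵀ / (1 + v)`, `v = √(1 - |p|²)`: the square root of the induced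
metric of a spacelike graph with gradient `p`. -/
def sqBinv (n : ℕ) (p : EuclideanSpace ℝ (Fin n)) : Matrix (Fin n) (Fin n) ℝ :=
  1 - (1 + Real.sqrt (1 - ‖p‖ ^ 2))⁻¹ • Matrix.of fun i j => p i * p j

abbrev EE (n : ℕ) := EuclideanSpace ℝ (Fin n)

lemma ev_basis (n : ℕ) (i : Fin n) : ev n i = EuclideanSpace.basisFun (Fin n) ℝ i := by
  simp [ev]

lemma ev_norm (n : ℕ) (i : Fin n) : ‖ev n i‖ = 1 := by simp [ev]

lemma ev_sum (n : ℕ) (x : EE n) : ∑ i, ⟪ev n i, x⟫ • ev n i = x := by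
  have := (EuclideanSpace.basisFun (Fin n) ℝ).sum_repr' x
  simpa only [ev_basis] using this

lemma ev_inner_le (n : ℕ) (i : Fin n) (x : EE n) : |⟪ev n i, x⟫| ≤ ‖x‖ := by
  have := abs_real_inner_le_norm (ev n i) x
  rwa [ev_norm, one_mul] at this

lemma norm_le_sum (n : ℕ) (x : EE n) : ‖x‖ ≤ ∑ i, |⟪ev n i, x⟫| := by
  conv_lhs => rw [← ev_sum n x]
  refine (norm_sum_le _ _).trans (Finset.sum_le_sum fun i _ => ?_)
  rw [norm_smul, ev_norm, mul_one, Real.norm_eq_abs]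

/-- Operator bound by the trace for positive semidefinite symmetric maps. -/
lemma trace_bound (n : ℕ) (H : EE n →L[ℝ] EE n) (hs : ∀ a b, ⟪a, H b⟫ = ⟪H a, b⟫)
    (hp : ∀ a, 0 ≤ ⟪a, H a⟫) (a : EE n) :
    ‖H a‖ ≤ (n : ℝ) ^ 2 * (∑ i, ⟪ev n i, H (ev n i)⟫) * ‖a‖ := by
  set τ := ∑ i, ⟪ev n i, H (ev n i)⟫ with hτ
  have hd : ∀ i, ⟪ev n i, H (ev n i)⟫ ≤ τ := fun i =>
    Finset.single_le_sum (f := fun i => ⟪ev n i, H (ev n i)⟫) (fun j _ => hp _) (Finset.mem_univ i)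
  have hij : ∀ i j, |⟪ev n i, H (ev n j)⟫| ≤ τ := by
    intro i j
    have h1 := hp (ev n i + ev n j)
    have h2 := hp (ev n i - ev n j)
    have h3 : ⟪ev n j, H (ev n i)⟫ = ⟪ev n i, H (ev n j)⟫ := by
      rw [hs, real_inner_comm]
    simp only [map_add, map_sub, inner_add_left, inner_add_right, inner_sub_left,
      inner_sub_right, h3] at h1 h2
    rw [abs_le]
    constructor <;> linarith [hd i, hd j]
  have hj : ∀ j, ‖H (ev n j)‖ ≤ n * τ := by
    intro j
    refine (norm_le_sum n _).trans ?_
    refine (Finset.sum_le_sum fun i _ => hij i j).trans ?_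
    simp
  have hτ0 : 0 ≤ τ := Finset.sum_nonneg fun i _ => hp _
  have : H a = ∑ j, ⟪ev n j, a⟫ • H (ev n j) := by
    conv_lhs => rw [← ev_sum n a]
    simp
  rw [this]
  refine (norm_sum_le _ _).trans ?_
  have : ∀ j ∈ Finset.univ, ‖⟪ev n j, a⟫ • H (ev n j)‖ ≤ ‖a‖ * (n * τ) := by
    intro j _
    rw [norm_smul, Real.norm_eq_abs]
    exact mul_le_mul (ev_inner_le n j a) (hj j) (norm_nonneg _) (norm_nonneg _)
  refine (Finset.sum_le_sum this).trans ?_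
  simp
  apply le_of_eq; ring

lemma second_test (φ φ' : ℝ → ℝ) (a : ℝ) (hm : IsLocalMin φ 0)
    (h1 : ∀ᶠ t in nhds 0, HasDerivAt φ (φ' t) t) (h2 : HasDerivAt φ' a 0) : 0 ≤ a := by
  by_contra hneg
  push Not at hneg
  have e1 : deriv φ =ᶠ[nhds 0] φ' := h1.mono fun t ht => ht.deriv
  have d2 : deriv (deriv φ) 0 = a := by rw [e1.deriv_eq]; exact h2.deriv
  have hmax := isLocalMax_of_deriv_deriv_neg (f := φ) (x₀ := 0) (by rw [d2]; exact hneg)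
    hm.deriv_eq_zero h1.self_of_nhds.continuousAt
  have : φ =ᶠ[nhds 0] fun _ => φ 0 := by
    filter_upwards [hm, hmax] with t h1 h2 using le_antisymm h2 h1
  have := this.deriv.deriv_eq
  rw [d2] at this
  simp at this
  linarith

lemma grad_inner (n : ℕ) (f : EE n → ℝ) (x v : EE n) : ⟪gradient f x, v⟫ = fderiv ℝ f x v := by
  simp [gradient]

lemma grad_contDiffAt (n : ℕ) (f : EE n → ℝ) (x : EE n) (hf : ContDiffAt ℝ (⊤ : ℕ∞) f x) :
    ContDiffAt ℝ (⊤ : ℕ∞) (gradient f) x := by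
  have : ContDiffAt ℝ (⊤ : ℕ∞) (fderiv ℝ f) x := hf.fderiv_right (by simp)
  exact ((InnerProductSpace.toDual ℝ (EE n)).symm.contDiff.contDiffAt).comp x this

lemma grad_symm (n : ℕ) (f : EE n → ℝ) (x : EE n) (hf : ContDiffAt ℝ (⊤ : ℕ∞) f x) (a b : EE n) :
    ⟪a, fderiv ℝ (gradient f) x b⟫ = ⟪fderiv ℝ (gradient f) x a, b⟫ := by
  have hG : DifferentiableAt ℝ (gradient f) x := (grad_contDiffAt n f x hf).differentiableAt (by simp)
  have hD : DifferentiableAt ℝ (fderiv ℝ f) x :=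
    (hf.fderiv_right (m := (⊤ : ℕ∞)) (by simp)).differentiableAt (by simp)
  have key : ∀ a b, ⟪fderiv ℝ (gradient f) x a, b⟫ = fderiv ℝ (fderiv ℝ f) x a b := by
    intro a b
    have h1 : HasFDerivAt (fun y => ⟪gradient f y, b⟫) _ x :=
      hG.hasFDerivAt.inner ℝ (hasFDerivAt_const b x)
    have h2 : HasFDerivAt (fun y => fderiv ℝ f y b) _ x :=
      hD.hasFDerivAt.clm_apply (hasFDerivAt_const b x)
    have h3 : (fun y => ⟪gradient f y, b⟫) = fun y => fderiv ℝ f y b := by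
      funext y; exact grad_inner n f y b
    rw [h3] at h1
    have := congrArg (fun L => L a) (h1.unique h2)
    simpa using this
  rw [real_inner_comm, key, key]
  have : IsSymmSndFDerivAt ℝ f x := hf.isSymmSndFDerivAt (by simpa using (WithTop.coe_le_coe.2 (le_top : (2 : ℕ∞) ≤ ⊤)))
  exact this.eq b a

lemma convex_of_def (n : ℕ) (Ω : Set (EE n)) (g : EE n → ℝ) (θ : ℝ)
    (hΩ : IsUnifConvexDefFn n Ω g θ) : Convex ℝ Ω := by
  obtain ⟨hg, hE, -, hθ, hc⟩ := hΩ
  have hconc : ConcaveOn ℝ Set.univ g := by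
    refine ⟨convex_univ, ?_⟩
    intro x _ y _ a b ha hb hab
    let φ : ℝ → ℝ := fun t => g (x + t • (y - x))
    have hl : ∀ t : ℝ, HasDerivAt (fun t : ℝ => x + t • (y - x)) (y - x) t := by
      intro t
      simpa using ((hasDerivAt_id t).smul_const (y - x)).const_add x
    have h1 : ∀ t, HasDerivAt φ ⟪gradient g (x + t • (y - x)), y - x⟫ t := by
      intro t
      rw [grad_inner]
      exact ((hg.differentiable (by simp)).differentiableAt.hasFDerivAt (x := x + t • (y - x))).comp_hasDerivAt t (hl t)
    have h2 : ∀ t, HasDerivAt (fun t : ℝ => ⟪gradient g (x + t • (y - x)), y - x⟫)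
        ⟪fderiv ℝ (gradient g) (x + t • (y - x)) (y - x), y - x⟫ t := by
      intro t
      have hG : DifferentiableAt ℝ (gradient g) (x + t • (y - x)) :=
        (grad_contDiffAt n g _ hg.contDiffAt).differentiableAt (by simp)
      have := (hG.hasFDerivAt.comp_hasDerivAt t (hl t)).inner ℝ (hasDerivAt_const t (y - x))
      simpa using this
    have e1 : deriv φ = fun t : ℝ => ⟪gradient g (x + t • (y - x)), y - x⟫ :=
      funext fun t => (h1 t).deriv
    have hφ : ConcaveOn ℝ Set.univ φ := by
      apply concaveOn_univ_of_deriv2_nonpos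
      · exact fun t => (h1 t).differentiableAt
      · rw [e1]; exact fun t => (h2 t).differentiableAt
      · intro t
        simp only [Function.iterate_succ, Function.iterate_zero, Function.comp, id]
        rw [e1, (h2 t).deriv, real_inner_comm]
        refine (hc _ _).trans ?_
        have : 0 ≤ θ * ‖y - x‖ ^ 2 := by positivity
        linarith
    have := hφ.2 (Set.mem_univ 0) (Set.mem_univ 1) ha hb hab
    simp only [φ] at this
    have e : x + (a • (0:ℝ) + b • (1:ℝ)) • (y - x) = a • x + b • y := by
      have : a = 1 - b := by linarith
      subst this
      simp; module
    rw [e] at this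
    simpa using this
  rw [hE]
  have := hconc.convex_gt 0
  simpa using this

lemma mop_formula (n : ℕ) (u : EE n → ℝ) (x : EE n) (hu : ContDiffAt ℝ (⊤ : ℕ∞) u x)
    (hx : ‖gradient u x‖ < 1) :
    (1 - ‖gradient u x‖ ^ 2) * (∑ i, ⟪ev n i, fderiv ℝ (gradient u) x (ev n i)⟫)
      + ⟪gradient u x, fderiv ℝ (gradient u) x (gradient u x)⟫
      = MOp n u x * ((1 - ‖gradient u x‖ ^ 2) * Real.sqrt (1 - ‖gradient u x‖ ^ 2)) := by
  have hG : HasFDerivAt (gradient u) (fderiv ℝ (gradient u) x) x :=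
    ((grad_contDiffAt n u x hu).differentiableAt (by simp)).hasFDerivAt
  set H := fderiv ℝ (gradient u) x with hH
  set p := gradient u x with hp
  have hr : 0 < 1 - ‖p‖ ^ 2 := by nlinarith [norm_nonneg p]
  set q := Real.sqrt (1 - ‖p‖ ^ 2) with hq
  have hq0 : 0 < q := Real.sqrt_pos.2 hr
  have hqq : q ^ 2 = 1 - ‖p‖ ^ 2 := Real.sq_sqrt hr.le
  have key : ∀ i, fderiv ℝ (fun y => fderiv ℝ u y (ev n i) / Real.sqrt (1 - ‖gradient u y‖ ^ 2)) x
      (ev n i) = ⟪ev n i, H (ev n i)⟫ / q + ⟪ev n i, p⟫ * ⟪p, H (ev n i)⟫ / q ^ 3 := by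
    intro i
    have h3 : (fun y => fderiv ℝ u y (ev n i) / Real.sqrt (1 - ‖gradient u y‖ ^ 2))
        = fun y => ⟪gradient u y, ev n i⟫ * (Real.sqrt (1 - ‖gradient u y‖ ^ 2))⁻¹ := by
      funext y; rw [grad_inner, div_eq_mul_inv]
    rw [h3]
    have d1 := hG.inner ℝ (hasFDerivAt_const (ev n i) x)
    have d2 := ((hG.norm_sq.const_sub 1).sqrt hr.ne')
    have d3 := (hasDerivAt_inv hq0.ne').comp_hasFDerivAt x d2
    have d4 := d1.mul d3
    have d5 : fderiv ℝ (fun y => ⟪gradient u y, ev n i⟫ * (Real.sqrt (1 - ‖gradient u y‖ ^ 2))⁻¹) x = _ :=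
      d4.fderiv
    rw [d5]
    simp [← hp, ← hq, real_inner_comm (ev n i)]
    field_simp
    try ring
  have hsum : ⟪p, H p⟫ = ∑ i, ⟪ev n i, p⟫ * ⟪p, H (ev n i)⟫ := by
    have e : H p = ∑ i, ⟪ev n i, p⟫ • H (ev n i) := by
      conv_lhs => rw [← ev_sum n p]
      simp
    rw [e, inner_sum]
    simp only [inner_smul_right]
  rw [MOp, Finset.sum_congr rfl (fun i _ => key i), Finset.sum_add_distrib, ← Finset.sum_div,
    ← Finset.sum_div, ← hsum, ← hqq]
  field_simp

lemma d2_symm1 (n : ℕ) (u : EE n → ℝ) (x : EE n) (hu : ContDiffAt ℝ (⊤ : ℕ∞) u x) (v w : EE n) :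
    fderiv ℝ (fderiv ℝ (gradient u)) x v w = fderiv ℝ (fderiv ℝ (gradient u)) x w v := by
  have : IsSymmSndFDerivAt ℝ (gradient u) x := (grad_contDiffAt n u x hu).isSymmSndFDerivAt
    (by simpa using (WithTop.coe_le_coe.2 (le_top : (2 : ℕ∞) ≤ ⊤)))
  exact this.eq v w

lemma d1_hasFDerivAt (n : ℕ) (u : EE n → ℝ) (x : EE n) (hu : ContDiffAt ℝ (⊤ : ℕ∞) u x) :
    HasFDerivAt (gradient u) (fderiv ℝ (gradient u) x) x :=
  ((grad_contDiffAt n u x hu).differentiableAt (by simp)).hasFDerivAt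

lemma d2_hasFDerivAt (n : ℕ) (u : EE n → ℝ) (x : EE n) (hu : ContDiffAt ℝ (⊤ : ℕ∞) u x) :
    HasFDerivAt (fderiv ℝ (gradient u)) (fderiv ℝ (fderiv ℝ (gradient u)) x) x :=
  (((grad_contDiffAt n u x hu).fderiv_right (m := (⊤ : ℕ∞)) (by simp)).differentiableAt
    (by simp)).hasFDerivAt

lemma d2_symm2 (n : ℕ) (u : EE n → ℝ) (Ω : Set (EE n)) (hΩ : IsOpen Ω)
    (hu : ∀ x ∈ Ω, ContDiffAt ℝ (⊤ : ℕ∞) u x) (x : EE n) (hx : x ∈ Ω) (v a b : EE n) :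
    ⟪a, fderiv ℝ (fderiv ℝ (gradient u)) x v b⟫ = ⟪fderiv ℝ (fderiv ℝ (gradient u)) x v a, b⟫ := by
  have hD := d2_hasFDerivAt n u x (hu x hx)
  have h1 : HasFDerivAt (fun y => ⟪a, fderiv ℝ (gradient u) y b⟫) _ x :=
    (hasFDerivAt_const a x).inner ℝ (hD.clm_apply (hasFDerivAt_const b x))
  have h2 : HasFDerivAt (fun y => ⟪fderiv ℝ (gradient u) y a, b⟫) _ x :=
    (hD.clm_apply (hasFDerivAt_const a x)).inner ℝ (hasFDerivAt_const b x)
  have e : (fun y => ⟪a, fderiv ℝ (gradient u) y b⟫) =ᶠ[nhds x]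
      (fun y => ⟪fderiv ℝ (gradient u) y a, b⟫) := by
    filter_upwards [hΩ.mem_nhds hx] with y hy using grad_symm n u y (hu y hy) a b
  have := congrArg (fun L => L v) ((h2.congr_of_eventuallyEq e).unique h1)
  simpa using this.symm

lemma pde_diff (n : ℕ) (u : EE n → ℝ) (c : ℝ) (Ω : Set (EE n)) (hΩ : IsOpen Ω)
    (hu : ∀ x ∈ Ω, ContDiffAt ℝ (⊤ : ℕ∞) u x) (hs : ∀ x ∈ Ω, ‖gradient u x‖ < 1)
    (hc : ∀ x ∈ Ω, MOp n u x = c) (x : EE n) (hx : x ∈ Ω) (v : EE n) :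
    (1 - ‖gradient u x‖ ^ 2) *
      (∑ i, ⟪fderiv ℝ (fderiv ℝ (gradient u)) x (ev n i) (ev n i), v⟫)
      + ⟪fderiv ℝ (fderiv ℝ (gradient u)) x (gradient u x) (gradient u x), v⟫
    = 2 * ⟪gradient u x, fderiv ℝ (gradient u) x v⟫ *
        (∑ i, ⟪ev n i, fderiv ℝ (gradient u) x (ev n i)⟫)
      - 2 * ⟪fderiv ℝ (gradient u) x v, fderiv ℝ (gradient u) x (gradient u x)⟫
      - 3 * c * Real.sqrt (1 - ‖gradient u x‖ ^ 2) *
        ⟪gradient u x, fderiv ℝ (gradient u) x v⟫ := by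
  have hD := d2_hasFDerivAt n u x (hu x hx)
  have hG := d1_hasFDerivAt n u x (hu x hx)
  have hr : 0 < 1 - ‖gradient u x‖ ^ 2 := by nlinarith [norm_nonneg (gradient u x), hs x hx]
  have hr1 := hG.norm_sq.const_sub 1
  have hτ : HasFDerivAt (fun y => ∑ i, ⟪ev n i, fderiv ℝ (gradient u) y (ev n i)⟫) _ x :=
    HasFDerivAt.fun_sum (u := Finset.univ) fun i _ =>
      (hasFDerivAt_const (ev n i) x).inner ℝ (hD.clm_apply (hasFDerivAt_const (ev n i) x))
  have hl := (hr1.mul hτ).add (hG.inner ℝ (hD.clm_apply hG))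
  have hrr := (hr1.mul (hr1.sqrt hr.ne')).const_mul c
  have e := fun (h : _ =ᶠ[nhds x] _) => (hrr.congr_of_eventuallyEq h).unique hl
  have e2 := e (by
    filter_upwards [hΩ.mem_nhds hx] with y hy
    have := mop_formula n u y (hu y hy) (hs y hy)
    rw [hc y hy] at this
    simpa using this)
  have e3 := congrArg (fun L => L v) e2
  have t1 : ∀ a, ⟪a, fderiv ℝ (fderiv ℝ (gradient u)) x v a⟫
      = ⟪fderiv ℝ (fderiv ℝ (gradient u)) x a a, v⟫ := by
    intro a
    rw [d2_symm1 n u x (hu x hx), d2_symm2 n u Ω hΩ hu x hx]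
  have t2 : ⟪gradient u x, fderiv ℝ (gradient u) x (fderiv ℝ (gradient u) x v)⟫
      = ⟪fderiv ℝ (gradient u) x v, fderiv ℝ (gradient u) x (gradient u x)⟫ := by
    rw [grad_symm n u x (hu x hx), real_inner_comm]
  simp [inner_add_right, t1, t2] at e3
  set q := Real.sqrt (1 - ‖gradient u x‖ ^ 2) with hq
  have hq0 : 0 < q := Real.sqrt_pos.2 hr
  have hqq : q ^ 2 = 1 - ‖gradient u x‖ ^ 2 := Real.sq_sqrt hr.le
  rw [← hqq] at e3 ⊢
  field_simp at e3
  rw [grad_inner n u x (fderiv ℝ (gradient u) x v)]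
  linarith

lemma min_cond (n : ℕ) (u g h : EE n → ℝ) (K : ℝ) (x : EE n)
    (Ω : Set (EE n)) (hΩ : IsOpen Ω) (hx : x ∈ Ω)
    (hu : ∀ x ∈ Ω, ContDiffAt ℝ (⊤ : ℕ∞) u x) (hg : ContDiff ℝ (⊤ : ℕ∞) g)
    (hh : ContDiff ℝ (⊤ : ℕ∞) h)
    (hm : IsLocalMin (fun y => K * h (gradient u y) - g y) x) :
    K • fderiv ℝ (gradient u) x (gradient h (gradient u x)) = gradient g x ∧
    ∀ v, 0 ≤ K * (⟪fderiv ℝ (gradient u) x v,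
        fderiv ℝ (gradient h) (gradient u x) (fderiv ℝ (gradient u) x v)⟫
        + ⟪fderiv ℝ (fderiv ℝ (gradient u)) x v v, gradient h (gradient u x)⟫)
        - ⟪v, fderiv ℝ (gradient g) x v⟫ := by
  have hgd : ∀ y, HasFDerivAt g (fderiv ℝ g y) y :=
    fun y => ((hg.differentiable (by simp)) y).hasFDerivAt
  have hhd : ∀ y, HasFDerivAt h (fderiv ℝ h y) y :=
    fun y => ((hh.differentiable (by simp)) y).hasFDerivAt
  have hΦ : ∀ y ∈ Ω, HasFDerivAt (fun y => K * h (gradient u y) - g y)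
      (K • (fderiv ℝ h (gradient u y)).comp (fderiv ℝ (gradient u) y) - fderiv ℝ g y) y :=
    fun y hy => (((hhd _).comp y (d1_hasFDerivAt n u y (hu y hy))).const_mul K).sub (hgd y)
  constructor
  · have h0 := hm.hasFDerivAt_eq_zero (hΦ x hx)
    apply ext_inner_right ℝ
    intro v
    have := congrArg (fun L => L v) h0
    simp at this
    rw [inner_smul_left, ← grad_symm n u x (hu x hx), grad_inner, grad_inner]
    simp
    linarith
  · intro v
    have hl : ∀ t : ℝ, HasDerivAt (fun t : ℝ => x + t • v) v t := by
      intro t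
      simpa using ((hasDerivAt_id t).smul_const v).const_add x
    have hl0 : Filter.Tendsto (fun t : ℝ => x + t • v) (nhds 0) (nhds x) := by
      have := (hl 0).continuousAt.tendsto
      simpa using this
    refine second_test (fun t => K * h (gradient u (x + t • v)) - g (x + t • v))
      (fun t => K * ⟪gradient h (gradient u (x + t • v)), fderiv ℝ (gradient u) (x + t • v) v⟫
        - ⟪gradient g (x + t • v), v⟫) _ ?_ ?_ ?_
    · have := hl0.eventually hm
      filter_upwards [this] with t ht
      simpa using ht
    · filter_upwards [hl0.eventually (hΩ.mem_nhds hx)] with t ht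
      have := (hΦ _ ht).comp_hasDerivAt t (hl t)
      exact HasDerivAt.congr_deriv this (by simp)
    · have hx0 : x = x + (0:ℝ) • v := by simp
      have G1 := d1_hasFDerivAt n u x (hu x hx)
      have D1 := d2_hasFDerivAt n u x (hu x hx)
      have h1 := d1_hasFDerivAt n h (gradient u x) hh.contDiffAt
      have g1 := d1_hasFDerivAt n g x hg.contDiffAt
      have F : HasFDerivAt (fun y => K * ⟪gradient h (gradient u y), fderiv ℝ (gradient u) y v⟫
        - ⟪gradient g y, v⟫) _ x :=
        (((h1.comp x G1).inner ℝ (D1.clm_apply (hasFDerivAt_const v x))).const_mul K).sub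
          (g1.inner ℝ (hasFDerivAt_const v x))
      have h0 := hl 0
      have := HasFDerivAt.comp_hasDerivAt (0:ℝ) (f := fun t : ℝ => x + t • v) (by rw [← hx0]; exact F) h0
      refine this.congr_deriv ?_
      simp
      rw [real_inner_comm v,
        real_inner_comm (fderiv ℝ (gradient u) x v)]
      ring

/-- Pointwise consequences of the equation. -/
lemma pde_bounds (n : ℕ) (u : EE n → ℝ) (c : ℝ) (x : EE n)
    (hu : ContDiffAt ℝ (⊤ : ℕ∞) u x) (hs : ‖gradient u x‖ < 1)
    (hpos : ∀ ξ : EE n, ξ ≠ 0 → 0 < ⟪ξ, fderiv ℝ (gradient u) x ξ⟫)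
    (hc : MOp n u x = c) :
    0 ≤ c ∧ 0 ≤ (∑ i, ⟪ev n i, fderiv ℝ (gradient u) x (ev n i)⟫) ∧
    (∀ a, ‖fderiv ℝ (gradient u) x a‖ ≤
      (n : ℝ) ^ 2 * (∑ i, ⟪ev n i, fderiv ℝ (gradient u) x (ev n i)⟫) * ‖a‖) ∧
    (∑ i, ⟪ev n i, fderiv ℝ (gradient u) x (ev n i)⟫) ≤ c ∧
    ∀ δ > 0, δ ≤ 1 - ‖gradient u x‖ ^ 2 → c * Real.sqrt (1 - ‖gradient u x‖ ^ 2) ≤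
      (1 + (n : ℝ) ^ 2 / δ) * (∑ i, ⟪ev n i, fderiv ℝ (gradient u) x (ev n i)⟫) := by
  have hp : ∀ a, 0 ≤ ⟪a, fderiv ℝ (gradient u) x a⟫ := by
    intro a
    by_cases h : a = 0
    · simp [h]
    · exact (hpos a h).le
  have hb := trace_bound n (fderiv ℝ (gradient u) x) (grad_symm n u x hu) hp
  have hf := mop_formula n u x hu hs
  rw [hc] at hf
  have hτ : 0 ≤ (∑ i, ⟪ev n i, fderiv ℝ (gradient u) x (ev n i)⟫) :=
    Finset.sum_nonneg fun i _ => hp _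
  have hpp := hp (gradient u x)
  have hbp := hb (gradient u x)
  set τ := (∑ i, ⟪ev n i, fderiv ℝ (gradient u) x (ev n i)⟫)
  set p := gradient u x
  have hr : 0 < 1 - ‖p‖ ^ 2 := by nlinarith [norm_nonneg p]
  have hr1 : 1 - ‖p‖ ^ 2 ≤ 1 := by nlinarith [norm_nonneg p]
  have hq0 : 0 < Real.sqrt (1 - ‖p‖ ^ 2) := Real.sqrt_pos.2 hr
  have hq1 : Real.sqrt (1 - ‖p‖ ^ 2) ≤ 1 := Real.sqrt_le_one.2 hr1
  set r := 1 - ‖p‖ ^ 2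
  set q := Real.sqrt r
  have hc0 : 0 ≤ c := by
    have : 0 ≤ c * (r * q) := by rw [← hf]; positivity
    exact nonneg_of_mul_nonneg_left this (by positivity)
  refine ⟨hc0, hτ, hb, ?_, ?_⟩
  · have h1 : r * τ ≤ r * (c * q) := by nlinarith
    have h2 := le_of_mul_le_mul_left h1 hr
    nlinarith
  · intro δ hδ hδr
    have h1 : ⟪p, fderiv ℝ (gradient u) x p⟫ ≤ (n : ℝ) ^ 2 * τ := by
      refine (real_inner_le_norm _ _).trans ?_
      have h3 : 0 ≤ (n : ℝ) ^ 2 * τ := by positivity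
      have h4 : ‖p‖ * ‖fderiv ℝ (gradient u) x p‖ ≤ ‖p‖ * ((n : ℝ) ^ 2 * τ * ‖p‖) :=
        mul_le_mul_of_nonneg_left hbp (norm_nonneg _)
      have h5 : ‖p‖ * ‖p‖ ≤ 1 := by nlinarith [norm_nonneg p]
      nlinarith
    have h2 : c * q = τ + ⟪p, fderiv ℝ (gradient u) x p⟫ / r := by
      field_simp; linarith
    rw [h2]
    have h3 : ⟪p, fderiv ℝ (gradient u) x p⟫ / r ≤ (n : ℝ) ^ 2 * τ / δ :=
      div_le_div₀ (by positivity) h1 hδ hδr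
    have : (1 + (n : ℝ) ^ 2 / δ) * τ = τ + (n : ℝ) ^ 2 * τ / δ := by ring
    linarith

lemma key_est (n : ℕ) (u g h : EE n → ℝ) (c K θ δ B1 B2 : ℝ) (x : EE n)
    (Ω : Set (EE n)) (hΩ : IsOpen Ω) (hx : x ∈ Ω)
    (hu : ∀ x ∈ Ω, ContDiffAt ℝ (⊤ : ℕ∞) u x) (hs : ∀ x ∈ Ω, ‖gradient u x‖ < 1)
    (hpos : ∀ x ∈ Ω, ∀ ξ : EE n, ξ ≠ 0 → 0 < ⟪ξ, fderiv ℝ (gradient u) x ξ⟫)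
    (hc : ∀ x ∈ Ω, MOp n u x = c)
    (hg : ContDiff ℝ (⊤ : ℕ∞) g) (hh : ContDiff ℝ (⊤ : ℕ∞) h)
    (hm : IsLocalMin (fun y => K * h (gradient u y) - g y) x)
    (hK : 0 < K) (hθ : 0 < θ) (hδ : 0 < δ) (hδr : δ ≤ 1 - ‖gradient u x‖ ^ 2)
    (hconc : ∀ p ξ : EE n, ⟪ξ, fderiv ℝ (gradient h) p ξ⟫ ≤ -θ * ‖ξ‖ ^ 2)
    (hB1 : ‖gradient g x‖ ≤ B1) (hB2 : ∀ v, -⟪v, fderiv ℝ (gradient g) x v⟫ ≤ B2 * ‖v‖ ^ 2)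
    (hB20 : 0 ≤ B2) :
    K * θ * δ * (∑ i, ⟪ev n i, fderiv ℝ (gradient u) x (ev n i)⟫) ^ 2 ≤
      n * (((2 + 2 * (n : ℝ) ^ 2 + 3 * (1 + (n : ℝ) ^ 2 / δ)) * B1) *
        (∑ i, ⟪ev n i, fderiv ℝ (gradient u) x (ev n i)⟫) + (n + 1) * B2) := by
  obtain ⟨hc0, hτ, hb, -, hcq⟩ := pde_bounds n u c x (hu x hx) (hs x hx) (hpos x hx) (hc x hx)
  have hcq := hcq δ hδ hδr
  obtain ⟨h1, h2⟩ := min_cond n u g h K x Ω hΩ hx hu hg hh hm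
  have hd := pde_diff n u c Ω hΩ hu hs hc x hx (gradient h (gradient u x))
  have hsx := hs x hx
  set H := fderiv ℝ (gradient u) x
  set D2 := fderiv ℝ (fderiv ℝ (gradient u)) x
  set p := gradient u x
  set ν := gradient h p
  set γ := gradient g x
  set τ := ∑ i, ⟪ev n i, H (ev n i)⟫ with hτdef
  have hq0 : 0 ≤ Real.sqrt (1 - ‖p‖ ^ 2) := Real.sqrt_nonneg _
  have hr1 : 1 - ‖p‖ ^ 2 ≤ 1 := by nlinarith [norm_nonneg p]
  set r := 1 - ‖p‖ ^ 2
  set q := Real.sqrt r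
  have hB10 : 0 ≤ B1 := (norm_nonneg _).trans hB1
  -- gradient terms
  have hpγ : |⟪p, γ⟫| ≤ B1 := by
    refine (abs_real_inner_le_norm _ _).trans ?_
    nlinarith [norm_nonneg p, norm_nonneg γ]
  have hγHp : |⟪γ, H p⟫| ≤ B1 * ((n : ℝ) ^ 2 * τ) := by
    refine (abs_real_inner_le_norm _ _).trans ?_
    refine mul_le_mul hB1 ?_ (norm_nonneg _) hB10
    refine (hb p).trans ?_
    have : 0 ≤ (n : ℝ) ^ 2 * τ := by positivity
    nlinarith [norm_nonneg p]
  have hKd : K * (r * (∑ i, ⟪D2 (ev n i) (ev n i), ν⟫) + ⟪D2 p p, ν⟫)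
      = 2 * ⟪p, γ⟫ * τ - 2 * ⟪γ, H p⟫ - 3 * (c * q) * ⟪p, γ⟫ := by
    rw [hd, ← h1, inner_smul_right, inner_smul_left]
    simp only [conj_trivial]
    ring
  have hKd2 : K * (r * (∑ i, ⟪D2 (ev n i) (ev n i), ν⟫) + ⟪D2 p p, ν⟫)
      ≤ ((2 + 2 * (n : ℝ) ^ 2 + 3 * (1 + (n : ℝ) ^ 2 / δ)) * B1) * τ := by
    rw [hKd]
    have a1 : ⟪p, γ⟫ * τ ≤ B1 * τ := mul_le_mul_of_nonneg_right (abs_le.1 hpγ).2 hτ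
    have a2 := (abs_le.1 hγHp).1
    have a3 : (c * q) * (-⟪p, γ⟫) ≤ (1 + (n : ℝ) ^ 2 / δ) * τ * B1 := by
      have : (c * q) * (-⟪p, γ⟫) ≤ (c * q) * B1 :=
        mul_le_mul_of_nonneg_left (by linarith [(abs_le.1 hpγ).1]) (by positivity)
      exact this.trans (mul_le_mul_of_nonneg_right hcq hB10)
    linarith
  -- sum of second-order conditions
  have hS := Finset.sum_nonneg fun (i : Fin n) (_ : i ∈ Finset.univ) => h2 (ev n i)
  have hP := h2 p
  have hterm : ∀ i : Fin n, K * (⟪H (ev n i), fderiv ℝ (gradient h) p (H (ev n i))⟫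
        + ⟪D2 (ev n i) (ev n i), ν⟫) - ⟪ev n i, fderiv ℝ (gradient g) x (ev n i)⟫
      ≤ -(K * θ) * ‖H (ev n i)‖ ^ 2 + K * ⟪D2 (ev n i) (ev n i), ν⟫ + B2 := by
    intro i
    have b1 := hB2 (ev n i)
    rw [ev_norm] at b1
    have b2 := mul_le_mul_of_nonneg_left (hconc p (H (ev n i))) hK.le
    rw [mul_add]
    linarith
  have hS2 := hS.trans (Finset.sum_le_sum fun i _ => hterm i)
  rw [Finset.sum_add_distrib, Finset.sum_add_distrib, ← Finset.mul_sum, ← Finset.mul_sum] at hS2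
  simp only [Finset.sum_const, Finset.card_univ, Fintype.card_fin, nsmul_eq_mul] at hS2
  have hP2 : 0 ≤ K * ⟪D2 p p, ν⟫ + B2 := by
    have b1 := hB2 p
    have b2 := mul_le_mul_of_nonneg_left (hconc p (H p)) hK.le
    have b3 : 0 ≤ K * (θ * ‖H p‖ ^ 2) := by positivity
    have b4 : B2 * ‖p‖ ^ 2 ≤ B2 :=
      mul_le_of_le_one_right hB20 (pow_le_one₀ (norm_nonneg p) hsx.le)
    rw [mul_add] at hP
    linarith
  have hcs : τ ^ 2 ≤ n * ∑ i, ‖H (ev n i)‖ ^ 2 := by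
    have t1 : τ ≤ ∑ i, ‖H (ev n i)‖ := Finset.sum_le_sum fun i _ =>
      (le_abs_self _).trans (ev_inner_le n i _)
    have t2 := sq_sum_le_card_mul_sum_sq (s := (Finset.univ : Finset (Fin n)))
      (f := fun i => ‖H (ev n i)‖)
    simp only [Finset.card_univ, Fintype.card_fin] at t2
    refine le_trans ?_ t2
    exact pow_le_pow_left₀ hτ t1 2
  set S := ∑ i, ‖H (ev n i)‖ ^ 2
  have hS0 : 0 ≤ S := Finset.sum_nonneg fun i _ => by positivity
  set Z := ∑ i, ⟪D2 (ev n i) (ev n i), ν⟫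
  have hr0 : 0 < r := lt_of_lt_of_le hδ hδr
  have f1 : 0 ≤ r * (-(K * θ) * S + K * Z + n * B2) := mul_nonneg hr0.le hS2
  have f2 : K * θ * δ * S ≤ K * θ * S * r := by
    have h0 : 0 ≤ K * θ * S := by positivity
    have := mul_le_mul_of_nonneg_left hδr h0
    linarith
  have f3 : r * (n * B2) ≤ n * B2 := by
    have h0 : 0 ≤ n * B2 := by positivity
    exact mul_le_of_le_one_left h0 hr1
  have f4 : K * θ * δ * S ≤
      ((2 + 2 * (n : ℝ) ^ 2 + 3 * (1 + (n : ℝ) ^ 2 / δ)) * B1) * τ + (n + 1) * B2 := by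
    linarith
  calc K * θ * δ * τ ^ 2 ≤ K * θ * δ * (n * S) := by gcongr
    _ = n * (K * θ * δ * S) := by ring
    _ ≤ _ := by gcongr

lemma boundary_deriv (n : ℕ) (Ω : Set (EE n)) (h f : EE n → ℝ) (y : EE n) (f' : EE n →L[ℝ] ℝ)
    (hΩ : Ω = {p | 0 < h p}) (hh : ContDiff ℝ (⊤ : ℕ∞) h) (hy : h y = 0)
    (hν : ‖gradient h y‖ = 1) (hf : HasFDerivAt f f' y) (hf0 : f y = 0)
    (hfp : ∀ z ∈ Ω, 0 ≤ f z) (ξ : EE n) (hξ : 0 ≤ ⟪gradient h y, ξ⟫) : 0 ≤ f' ξ := by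
  have pos : ∀ ξ : EE n, 0 < ⟪gradient h y, ξ⟫ → 0 ≤ f' ξ := by
    intro ξ hξ
    by_contra hneg
    push Not at hneg
    have hl : HasDerivAt (fun t : ℝ => y + t • ξ) ξ 0 := by
      simpa using ((hasDerivAt_id (0:ℝ)).smul_const ξ).const_add y
    have hy0 : y = y + (0:ℝ) • ξ := by simp
    have d1 : HasDerivAt (fun t : ℝ => f (y + t • ξ)) (f' ξ) 0 :=
      HasFDerivAt.comp_hasDerivAt (0:ℝ) (f := fun t : ℝ => y + t • ξ) (by rw [← hy0]; exact hf) hl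
    have d2 : HasDerivAt (fun t : ℝ => h (y + t • ξ)) (fderiv ℝ h y ξ) 0 :=
      HasFDerivAt.comp_hasDerivAt (0:ℝ) (f := fun t : ℝ => y + t • ξ)
        (by rw [← hy0]; exact ((hh.differentiable (by simp)) y).hasFDerivAt) hl
    rw [grad_inner] at hξ
    have e1 := hasDerivWithinAt_iff_tendsto_slope.1 (d1.hasDerivWithinAt (s := Set.Ioi 0))
    have e2 := hasDerivWithinAt_iff_tendsto_slope.1 (d2.hasDerivWithinAt (s := Set.Ioi 0))
    have e1' := e1.eventually (gt_mem_nhds hneg)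
    have e2' := e2.eventually (lt_mem_nhds hξ)
    have hs : Set.Ioi (0:ℝ) \ {0} = Set.Ioi 0 := by ext; simp
    rw [hs] at e1' e2'
    obtain ⟨t, ht1, ht2, ht⟩ := (e1'.and (e2'.and self_mem_nhdsWithin)).exists
    have ht : 0 < t := ht
    simp only [slope_def_field, ← hy0, hf0, hy, sub_zero] at ht1 ht2
    have hpos : 0 < h (y + t • ξ) := by
      have := mul_pos ht2 ht
      rwa [div_mul_cancel₀ _ ht.ne'] at this
    have hn := hfp (y + t • ξ) (by rw [hΩ]; exact hpos)
    have : 0 ≤ f (y + t • ξ) / t := by positivity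
    linarith
  by_contra hneg
  push Not at hneg
  have hall : ∀ ε > 0, 0 ≤ f' ξ + ε * f' (gradient h y) := by
    intro ε hε
    have := pos (ξ + ε • gradient h y) (by
      rw [inner_add_right, inner_smul_right, real_inner_self_eq_norm_sq, hν]
      linarith)
    simpa using this
  have h1 := hall 1 one_pos
  have hm : 0 < f' (gradient h y) := by linarith
  have h2 := hall (-(f' ξ) / (2 * f' (gradient h y))) (by apply div_pos <;> linarith)
  have : -(f' ξ) / (2 * f' (gradient h y)) * f' (gradient h y) = -(f' ξ) / 2 := by field_simp
  linarith

/-- Lemma 4.4.  Boundary bound `⟨β̃, D²ũ β̃⟩ ≤ C₂₈` on `∂Ω̃`, where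
`β̃(y) = ∇h̃(∇ũ(y))` and `h̃` is the defining function of `Ω`. -/
theorem statement13 (n : ℕ) (hn : 2 ≤ n) (Ω Ω' : Set (EuclideanSpace ℝ (Fin n)))
    (g h : EuclideanSpace ℝ (Fin n) → ℝ) (θ₁ θ₂ : ℝ)
    (hΩb : Bornology.IsBounded Ω) (hΩ'b : Bornology.IsBounded Ω')
    (hΩ : IsUnifConvexDefFn n Ω g θ₁) (hΩ' : IsUnifConvexDefFn n Ω' h θ₂)
    (hsub : closure Ω' ⊆ Metric.ball (0 : EuclideanSpace ℝ (Fin n)) 1) :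
    ∃ C₂₈ : ℝ, 0 < C₂₈ ∧
      ∀ (u ut : EuclideanSpace ℝ (Fin n) → ℝ) (c : ℝ),
        IsSol n Ω Ω' u c → IsLegendre n Ω Ω' u ut →
        ∀ y ∈ frontier Ω',
          ⟪gradient g (gradient ut y),
            fderiv ℝ (gradient ut) y (gradient g (gradient ut y))⟫ ≤ C₂₈ := by
  by_cases hne : Ω'.Nonempty
  swap
  · refine ⟨1, one_pos, ?_⟩
    intro u ut c _ _ y hy
    rw [Set.not_nonempty_iff_eq_empty.1 hne] at hy
    simp at hy
  have hconv := convex_of_def n Ω g θ₁ hΩ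
  obtain ⟨hg, hΩe, hνg, -, -⟩ := hΩ
  obtain ⟨hh, hΩ'e, hν, hθ, hconc⟩ := hΩ'
  have hΩo : IsOpen Ω := by rw [hΩe]; exact isOpen_lt continuous_const hg.continuous
  have hΩ'o : IsOpen Ω' := by rw [hΩ'e]; exact isOpen_lt continuous_const hh.continuous
  have hKc : IsCompact (closure Ω) := hΩb.isCompact_closure
  have hKc' : IsCompact (closure Ω') := hΩ'b.isCompact_closure
  have hn0 : (0:ℝ) < n := by exact_mod_cast (by omega : 0 < n)
  -- two points
  obtain ⟨y1, hy1⟩ := hne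
  obtain ⟨y2, hy2, hy12⟩ : ∃ y2 ∈ Ω', 0 < ‖y2 - y1‖ := by
    obtain ⟨ε, hε, hb⟩ := Metric.isOpen_iff.1 hΩ'o y1 hy1
    refine ⟨y1 + (ε / 2) • ev n ⟨0, by omega⟩, hb ?_, ?_⟩
    · simp [norm_smul, ev_norm, abs_of_pos hε]
      linarith
    · simp [norm_smul, ev_norm]
      exact hε.ne'
  obtain ⟨R, hR⟩ := hΩb.subset_closedBall 0
  obtain ⟨D, hD, hDb⟩ : ∃ D : ℝ, 0 < D ∧ ∀ a ∈ Ω, ∀ b ∈ Ω, ‖a - b‖ ≤ D := by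
    refine ⟨2 * |R| + 1, by positivity, fun a ha b hb => ?_⟩
    have h1 := hR ha
    have h2 := hR hb
    simp at h1 h2
    have := norm_sub_le a b
    linarith [le_abs_self R]
  -- delta
  obtain ⟨δ, hδ, hδb⟩ : ∃ δ : ℝ, 0 < δ ∧ ∀ p ∈ closure Ω', δ ≤ 1 - ‖p‖ ^ 2 := by
    obtain ⟨p0, hp0, hmin⟩ := hKc'.exists_isMinOn (f := fun p => 1 - ‖p‖ ^ 2)
      ⟨y1, subset_closure hy1⟩ (by fun_prop)
    refine ⟨1 - ‖p0‖ ^ 2, ?_, fun p hp => hmin hp⟩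
    have := hsub hp0
    simp at this
    nlinarith [norm_nonneg p0]
  have hgc : Continuous (gradient g) := continuous_iff_continuousAt.2 fun x =>
    (grad_contDiffAt n g x hg.contDiffAt).continuousAt
  have hgc2 : Continuous (fderiv ℝ (gradient g)) := continuous_iff_continuousAt.2 fun x =>
    (d2_hasFDerivAt n g x hg.contDiffAt).continuousAt
  obtain ⟨B1', hB1'⟩ := hKc.exists_bound_of_continuousOn hgc.continuousOn
  obtain ⟨B2', hB2'⟩ := hKc.exists_bound_of_continuousOn hgc2.continuousOn
  obtain ⟨B1, hB10, hB1⟩ : ∃ B1 : ℝ, 0 ≤ B1 ∧ ∀ x ∈ closure Ω, ‖gradient g x‖ ≤ B1 :=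
    ⟨|B1'|, abs_nonneg _, fun x hx => (hB1' x hx).trans (le_abs_self _)⟩
  obtain ⟨B2, hB20, hB2⟩ : ∃ B2 : ℝ, 0 ≤ B2 ∧ ∀ x ∈ closure Ω, ∀ v : EE n,
      -⟪v, fderiv ℝ (gradient g) x v⟫ ≤ B2 * ‖v‖ ^ 2 := by
    refine ⟨|B2'|, abs_nonneg _, fun x hx v => ?_⟩
    refine (neg_le_abs _).trans ((abs_real_inner_le_norm _ _).trans ?_)
    have h1 := (fderiv ℝ (gradient g) x).le_of_opNorm_le ((hB2' x hx).trans (le_abs_self _)) v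
    calc ‖v‖ * ‖fderiv ℝ (gradient g) x v‖ ≤ ‖v‖ * (|B2'| * ‖v‖) := by gcongr
      _ = _ := by ring
  -- constants
  obtain ⟨c0, hc0def⟩ : ∃ c0 : ℝ, c0 = ‖y2 - y1‖ / ((n : ℝ) ^ 2 * D) := ⟨_, rfl⟩
  have hc0 : 0 < c0 := by rw [hc0def]; positivity
  obtain ⟨A, hA⟩ : ∃ A : ℝ, A = 1 + (n : ℝ) ^ 2 / δ := ⟨_, rfl⟩
  have hA0 : 0 < A := by rw [hA]; positivity
  obtain ⟨τ0, hτ0def⟩ : ∃ τ0 : ℝ, τ0 = c0 * Real.sqrt δ / A := ⟨_, rfl⟩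
  have hτ0 : 0 < τ0 := by
    have := Real.sqrt_pos.2 hδ
    rw [hτ0def]; positivity
  obtain ⟨C1, hC1⟩ : ∃ C1 : ℝ,
    C1 = (2 + 2 * (n : ℝ) ^ 2 + 3 * (1 + (n : ℝ) ^ 2 / δ)) * B1 := ⟨_, rfl⟩
  have hC10 : 0 ≤ C1 := by rw [hC1]; positivity
  obtain ⟨C2, hC2⟩ : ∃ C2 : ℝ, C2 = ((n : ℝ) + 1) * B2 := ⟨_, rfl⟩
  have hC20 : 0 ≤ C2 := by rw [hC2]; positivity
  obtain ⟨K, hKdef⟩ : ∃ K : ℝ, K = n * (C1 / τ0 + C2 / τ0 ^ 2 + 1) / (θ₂ * δ) := ⟨_, rfl⟩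
  have hK : 0 < K := by rw [hKdef]; positivity
  have hKnum : ∀ τ, τ0 ≤ τ → ¬ (K * θ₂ * δ * τ ^ 2 ≤ n * (C1 * τ + C2)) := by
    intro τ hτ hle
    have hτp : 0 < τ := hτ0.trans_le hτ
    have e : K * θ₂ * δ * τ ^ 2 = n * (C1 * τ * (τ / τ0) + C2 * (τ / τ0) ^ 2 + τ ^ 2) := by
      rw [hKdef]; field_simp
    rw [e] at hle
    have h1 := le_of_mul_le_mul_left hle hn0
    have h2 : 1 ≤ τ / τ0 := (one_le_div hτ0).2 hτ
    have h3 : C1 * τ ≤ C1 * τ * (τ / τ0) := le_mul_of_one_le_right (by positivity) h2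
    have h4 : C2 ≤ C2 * (τ / τ0) ^ 2 := le_mul_of_one_le_right hC20 (one_le_pow₀ h2)
    have h5 : 0 < τ ^ 2 := by positivity
    linarith
  refine ⟨K, hK, ?_⟩
  intro u ut c hsol hleg y hy
  obtain ⟨⟨U, hU, hΩU, huU⟩, hs, hpos, hbij, hc⟩ := hsol
  obtain ⟨⟨V, hV, hΩV, hutV⟩, -, hgu⟩ := hleg
  have hu : ∀ x ∈ closure Ω, ContDiffAt ℝ (⊤ : ℕ∞) u x := fun x hx =>
    huU.contDiffAt (hU.mem_nhds (hΩU hx))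
  have hut : ContDiffAt ℝ (⊤ : ℕ∞) ut y :=
    hutV.contDiffAt (hV.mem_nhds (hΩV (frontier_subset_closure hy)))
  have hGc : ContinuousOn (gradient u) (closure Ω) := fun x hx =>
    (grad_contDiffAt n u x (hu x hx)).continuousAt.continuousWithinAt
  have hGmap : ∀ x ∈ closure Ω, gradient u x ∈ closure Ω' := by
    intro x hx
    have := hGc.image_closure ⟨x, hx, rfl⟩
    rwa [hbij.image_eq] at this
  -- lower bound on c
  have hcl : c0 ≤ c := by
    obtain ⟨x1, hx1, hxy1⟩ := hbij.surjOn hy1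
    obtain ⟨x2, hx2, hxy2⟩ := hbij.surjOn hy2
    have hlip : ‖gradient u x2 - gradient u x1‖ ≤ (n : ℝ) ^ 2 * c * ‖x2 - x1‖ := by
      refine hconv.norm_image_sub_le_of_norm_hasFDerivWithin_le (𝕜 := ℝ)
        (f' := fun x => fderiv ℝ (gradient u) x)
        (fun x hx => (d1_hasFDerivAt n u x (hu x (subset_closure hx))).hasFDerivWithinAt) ?_ hx1 hx2
      intro x hx
      have hx' := subset_closure hx
      obtain ⟨p1, p2, p3, p4, -⟩ := pde_bounds n u c x (hu x hx') (hs x hx') (hpos x hx') (hc x hx)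
      refine ContinuousLinearMap.opNorm_le_bound _ (by positivity) fun a => (p3 a).trans ?_
      gcongr
    obtain ⟨p1, -⟩ := pde_bounds n u c x1 (hu x1 (subset_closure hx1)) (hs x1 (subset_closure hx1))
      (hpos x1 (subset_closure hx1)) (hc x1 hx1)
    rw [hxy1, hxy2] at hlip
    have h1 : ‖y2 - y1‖ ≤ (n : ℝ) ^ 2 * c * D := hlip.trans (by
      have := hDb x2 hx2 x1 hx1
      gcongr)
    rw [hc0def, div_le_iff₀ (by positivity)]
    linarith
  -- barrier
  have hbar : ∀ x ∈ closure Ω, 0 ≤ K * h (gradient u x) - g x := by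
    have hh0 : closure Ω' ⊆ {p | 0 ≤ h p} := by
      refine closure_minimal ?_ (isClosed_le continuous_const hh.continuous)
      intro p hp
      rw [hΩ'e] at hp
      have hp' : 0 < h p := hp
      exact hp'.le
    have hcont : ContinuousOn (fun x => K * h (gradient u x) - g x) (closure Ω) :=
      ((hh.continuous.comp_continuousOn hGc).const_mul K).sub hg.continuous.continuousOn
    have hneΩ : (closure Ω).Nonempty := by
      obtain ⟨x1, hx1, -⟩ := hbij.surjOn hy1
      exact ⟨x1, subset_closure hx1⟩
    obtain ⟨x0, hx0, hmin⟩ := hKc.exists_isMinOn hneΩ hcont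
    intro x hx
    refine le_trans ?_ (hmin hx)
    by_cases hx0Ω : x0 ∈ Ω
    · exfalso
      have hlm : IsLocalMin (fun x => K * h (gradient u x) - g x) x0 := by
        filter_upwards [hΩo.mem_nhds hx0Ω] with z hz using hmin (subset_closure hz)
      have hδx := hδb _ (hGmap x0 hx0)
      have est := key_est n u g h c K θ₂ δ B1 B2 x0 Ω hΩo hx0Ω
        (fun x hx => hu x (subset_closure hx)) (fun x hx => hs x (subset_closure hx))
        (fun x hx => hpos x (subset_closure hx)) hc hg hh hlm hK hθ hδ hδx hconc
        (hB1 x0 hx0) (hB2 x0 hx0) hB20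
      rw [← hC1, ← hC2] at est
      refine hKnum _ ?_ est
      obtain ⟨p1, p2, -, -, p5⟩ := pde_bounds n u c x0 (hu x0 hx0) (hs x0 hx0) (hpos x0 hx0)
        (hc x0 hx0Ω)
      have p5 := p5 δ hδ hδx
      rw [← hA] at p5
      rw [hτ0def, div_le_iff₀ hA0]
      have hsq := Real.sqrt_le_sqrt hδx
      calc c0 * Real.sqrt δ ≤ c * Real.sqrt (1 - ‖gradient u x0‖ ^ 2) := by gcongr
        _ ≤ _ := p5
        _ = _ := mul_comm _ _
    · have h1 : g x0 ≤ 0 := by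
        rw [hΩe] at hx0Ω
        exact not_lt.1 hx0Ω
      have h2 : 0 ≤ h (gradient u x0) := hh0 (hGmap x0 hx0)
      have : 0 ≤ K * h (gradient u x0) := by positivity
      show 0 ≤ K * h (gradient u x0) - g x0
      linarith
  -- transfer to the dual side
  have hf1 : ∀ z ∈ Ω', 0 ≤ g (gradient ut z) := by
    intro z hz
    obtain ⟨x, hx, rfl⟩ := hbij.surjOn hz
    rw [hgu x hx]
    rw [hΩe] at hx
    exact le_of_lt hx
  have hf2 : ∀ z ∈ Ω', 0 ≤ K * h z - g (gradient ut z) := by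
    intro z hz
    obtain ⟨x, hx, rfl⟩ := hbij.surjOn hz
    rw [hgu x hx]
    exact hbar x (subset_closure hx)
  have hyc : y ∈ closure Ω' := frontier_subset_closure hy
  have hhy : h y = 0 := by
    have h1 : y ∉ Ω' := by
      rw [hΩ'o.frontier_eq] at hy
      exact hy.2
    have h2 : 0 ≤ h y := ContinuousWithinAt.closure_le hyc continuousWithinAt_const
      hh.continuous.continuousWithinAt (fun z hz => by
        rw [hΩ'e] at hz
        exact le_of_lt hz)
    rw [hΩ'e] at h1
    exact le_antisymm (not_lt.1 h1) h2
  have hHd := (((hg.differentiable (by simp)) (gradient ut y)).hasFDerivAt).comp y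
    (d1_hasFDerivAt n ut y hut)
  have hhd := (((hh.differentiable (by simp)) y).hasFDerivAt).const_mul K
  have hΦd := hhd.sub hHd
  have hHy0 : g (gradient ut y) = 0 := by
    have h1 : 0 ≤ g (gradient ut y) := ContinuousWithinAt.closure_le hyc continuousWithinAt_const
      hHd.continuousAt.continuousWithinAt hf1
    have h2 : 0 ≤ K * h y - g (gradient ut y) :=
      ContinuousWithinAt.closure_le hyc continuousWithinAt_const
      hΦd.continuousAt.continuousWithinAt hf2
    rw [hhy] at h2
    linarith
  have hνy := hν y hy
  set β := gradient g (gradient ut y) with hβ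
  rw [grad_inner]
  rcases le_total 0 ⟪gradient h y, β⟫ with hcase | hcase
  · have := boundary_deriv n Ω' h _ y _ hΩ'e hh hhy hνy hΦd (by simp [hhy, hHy0]) hf2 β hcase
    simp only [sub_apply, smul_apply,
      ContinuousLinearMap.comp_apply, smul_eq_mul] at this
    have hβ1 : ‖β‖ ≤ 1 := by
      have hcl : gradient ut y ∈ closure Ω :=
        (d1_hasFDerivAt n ut y hut).continuousAt.continuousWithinAt.mem_closure hyc (by
          intro z hz
          obtain ⟨x, hx, rfl⟩ := hbij.surjOn hz
          rw [hgu x hx]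
          exact hx)
      refine (hνg _ ?_).le
      rw [hΩo.frontier_eq]
      refine ⟨hcl, ?_⟩
      rw [hΩe]
      intro hlt
      have hlt' : 0 < g (gradient ut y) := hlt
      linarith
    have : fderiv ℝ h y β ≤ 1 := by
      rw [← grad_inner]
      refine (real_inner_le_norm _ _).trans ?_
      rw [hνy]; linarith
    nlinarith
  · have := boundary_deriv n Ω' h _ y _ hΩ'e hh hhy hνy hHd hHy0 hf1 (-β)
      (by rw [inner_neg_right]; linarith)
    simp only [map_neg, ContinuousLinearMap.comp_apply] at this
    linarith
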